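/- Assume Hypothesis (H). Then for every set A ⊆ ℝ × ℝ which does not have the Baire property there exists a Borel measurable function f : ℝ → ℝ such that the set {x ∈ ℝ : (x, f(x)) ∈ A} does not have the Baire property. -/

import Mathlib

open scoped symmDiff

/-- A set has the Baire property if it equals the symmetric difference of an
open set and a meager set. -/
def HasBaireProperty {X : Type*} [TopologicalSpace X] (S : Set X) : Prop :=
  ∃ U M : Set X, IsOpen U ∧ IsMeagre M ∧ S = U ∆ M

/-- A function has the Baire property if the preimage of every open set has
the Baire property. -/
def BaireFunction {X Y : Type*} [TopologicalSpace X] [TopologicalSpace Y] (g : X → Y) : Prop :=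
  ∀ U : Set Y, IsOpen U → HasBaireProperty (g ⁻¹' U)

/-- `F : ℝ × ℝ → ℝ` is Baire sup-measurable if for every `f : ℝ → ℝ` with the Baire
property, the function `x ↦ F (x, f x)` has the Baire property. -/
def BaireSupMeasurable (F : ℝ × ℝ → ℝ) : Prop :=
  ∀ f : ℝ → ℝ, BaireFunction f → BaireFunction (fun x => F (x, f x))

/-- A set `A` is nowhere meager in `X` if `A ∩ U` is nonmeager for every
nonempty open `U ⊆ X`. -/
def NowhereMeager {X : Type*} [TopologicalSpace X] (A : Set X) : Prop :=
  ∀ U : Set X, IsOpen U → U.Nonempty → ¬ IsMeagre (A ∩ U)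

/-- Hypothesis (H): for every `A ⊆ 2^ω × 2^ω` such that both `A` and its complement
are nowhere meager, there is an autohomeomorphism `f` of the Cantor space `2^ω`
such that `{x : (x, f x) ∈ A}` does not have the Baire property. -/
def HypH : Prop :=
  ∀ A : Set ((ℕ → Bool) × (ℕ → Bool)),
    NowhereMeager A → NowhereMeager Aᶜ →
    ∃ f : (ℕ → Bool) ≃ₜ (ℕ → Bool),
      ¬ HasBaireProperty {x : ℕ → Bool | (x, f x) ∈ A}

/-!
Call a continuous map *irreducible* here if inside every nonempty open set lies the preimage of a
nonempty open subset of the range. Category is blind to such maps: the residual filter of the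
source is the comap of that of the target. They are also injective on a residual set, so by
Lusin–Souslin they have a Borel left inverse up to a meager set. Binary expansion is irreducible,
because a binary digit is forced on an open subinterval; hence every nonempty open set of reals
contains an affine copy `φ(2^ω)` of `[0, 1]`.

If `A` lacks the Baire property, then `A` and `Aᶜ` are nonmeager in all nonempty open subsets of
some nonempty open `U × V`. Choose irreducible `φ` and `ψ` from `2^ω` into `U` and `V`, let `h` be
the map that (H) gives for the preimage of `A` under `φ × ψ`, and let `s` be a Borel left inverse
of `φ` off a meager set. Then `f = ψ ∘ h ∘ s` works, as `f (φ x) = ψ (h x)` for all but a meager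
set of `x`.
-/

open Set Filter Topology

section BaireProperty

variable {X : Type*} [TopologicalSpace X]

theorem hasBaireProperty_iff_baireMeasurableSet {S : Set X} :
    HasBaireProperty S ↔ BaireMeasurableSet S := by
  have symmDiff_meagre_iff (U : Set X) : IsMeagre (U ∆ S) ↔ S =ᵇ U := by
    rw [eventuallyEq_set]
    refine iff_of_eq (congrArg (· ∈ residual X) (Set.ext fun x => ?_))
    simp only [mem_compl_iff, mem_symmDiff, mem_ofPred_eq]
    tauto
  rw [BaireMeasurableSet.iff_residualEq_isOpen]
  constructor
  · rintro ⟨U, M, hU, hM, rfl⟩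
    refine ⟨U, hU, (symmDiff_meagre_iff U).1 ?_⟩
    rwa [symmDiff_symmDiff_cancel_left]
  · rintro ⟨U, hU, hSU⟩
    exact ⟨U, U ∆ S, hU, (symmDiff_meagre_iff U).2 hSU, (symmDiff_symmDiff_cancel_left U S).symm⟩

/-- The union of all open sets in which `S` is meager: the part of the space where `S` is small in
the sense of category. -/
def meagreLocus (S : Set X) : Set X :=
  ⋃₀ {V | IsOpen V ∧ IsMeagre (S ∩ V)}

theorem isOpen_meagreLocus (S : Set X) : IsOpen (meagreLocus S) :=
  isOpen_sUnion fun _ hV => hV.1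

theorem isMeagre_inter_meagreLocus [SecondCountableTopology X] (S : Set X) :
    IsMeagre (S ∩ meagreLocus S) := by
  obtain ⟨T, hT, hTS, hTU⟩ :=
    TopologicalSpace.isOpen_sUnion_countable {V | IsOpen V ∧ IsMeagre (S ∩ V)} fun _ hV => hV.1
  rw [meagreLocus, ← hTU, sUnion_eq_biUnion, inter_iUnion₂]
  exact isMeagre_biUnion hT fun V hV => (hTS hV).2

/-- `A` is nowhere meager inside the open set `W`: it is nonmeager in every nonempty open
subset of `W`. -/
def NowhereMeagerOn (A W : Set X) : Prop :=
  ∀ V ⊆ W, IsOpen V → V.Nonempty → ¬ IsMeagre (A ∩ V)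

theorem NowhereMeagerOn.of_disjoint_meagreLocus {A W : Set X}
    (hW : Disjoint W (meagreLocus A)) : NowhereMeagerOn A W :=
  fun V hVW hV ⟨_, hx⟩ hM =>
    disjoint_left.1 hW (hVW hx) (mem_sUnion.2 ⟨V, ⟨hV, hM⟩, hx⟩)

theorem hasBaireProperty_of_dense_meagreLocus_union [SecondCountableTopology X] {A : Set X}
    (hA : Dense (meagreLocus A ∪ meagreLocus Aᶜ)) : HasBaireProperty A := by
  rw [hasBaireProperty_iff_baireMeasurableSet, BaireMeasurableSet.iff_residualEq_isOpen]
  refine ⟨meagreLocus Aᶜ, isOpen_meagreLocus _, eventuallyEq_set.2 ?_⟩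
  have union_residual : meagreLocus A ∪ meagreLocus Aᶜ ∈ residual X :=
    residual_of_dense_open ((isOpen_meagreLocus A).union (isOpen_meagreLocus Aᶜ)) hA
  filter_upwards [union_residual, isMeagre_inter_meagreLocus A, isMeagre_inter_meagreLocus Aᶜ]
    with x hx hxA hxAc
  simp only [mem_union, mem_compl_iff, mem_inter_iff] at hx hxA hxAc
  tauto

theorem exists_isOpen_nowhereMeagerOn_of_not_hasBaireProperty [SecondCountableTopology X]
    {A : Set X} (hA : ¬ HasBaireProperty A) :
    ∃ W : Set X, IsOpen W ∧ W.Nonempty ∧ NowhereMeagerOn A W ∧ NowhereMeagerOn Aᶜ W := by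
  refine ⟨(closure (meagreLocus A ∪ meagreLocus Aᶜ))ᶜ, isClosed_closure.isOpen_compl, ?_, ?_, ?_⟩
  · rw [nonempty_compl]
    exact fun h => hA (hasBaireProperty_of_dense_meagreLocus_union (dense_iff_closure_eq.2 h))
  · exact .of_disjoint_meagreLocus
      (disjoint_compl_left_iff_subset.2 (subset_union_left.trans subset_closure))
  · exact .of_disjoint_meagreLocus
      (disjoint_compl_left_iff_subset.2 (subset_union_right.trans subset_closure))

end BaireProperty

/-- Irreducibility of a continuous map: every nonempty open set of the source contains the
preimage of a nonempty open set of the target. Instead of surjectivity, as is usual for irreducible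
maps, it is only asked that this open set lie in the range. -/
structure IsIrreducibleMap {X Y : Type*} [TopologicalSpace X] [TopologicalSpace Y]
    (f : X → Y) : Prop where
  continuous : Continuous f
  exists_preimage_subset : ∀ V : Set X, IsOpen V → V.Nonempty →
    ∃ O : Set Y, IsOpen O ∧ O.Nonempty ∧ O ⊆ range f ∧ f ⁻¹' O ⊆ V

theorem isIrreducibleMap_homeomorph {X Y : Type*} [TopologicalSpace X] [TopologicalSpace Y]
    (e : X ≃ₜ Y) : IsIrreducibleMap e where
  continuous := e.continuous
  exists_preimage_subset V hV hne :=
    ⟨e '' V, e.isOpenMap V hV, hne.image e, image_subset_range e V,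
      (e.injective.preimage_image V).subset⟩

namespace IsIrreducibleMap

variable {X Y Z : Type*} [TopologicalSpace X] [TopologicalSpace Y] [TopologicalSpace Z]
  {f : X → Y}

theorem comp {g : Y → Z} (hg : IsIrreducibleMap g) (hf : IsIrreducibleMap f) :
    IsIrreducibleMap (g ∘ f) where
  continuous := hg.continuous.comp hf.continuous
  exists_preimage_subset V hV hne := by
    obtain ⟨O, hO, hOne, hOf, hOV⟩ := hf.exists_preimage_subset V hV hne
    obtain ⟨P, hP, hPne, hPg, hPO⟩ := hg.exists_preimage_subset O hO hOne
    refine ⟨P, hP, hPne, fun z hz => ?_, fun x hx => hOV (hPO hx)⟩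
    obtain ⟨y, rfl⟩ := hPg hz
    obtain ⟨x, rfl⟩ := hOf (hPO hz)
    exact mem_range_self x

theorem prodMap {X' Y' : Type*} [TopologicalSpace X'] [TopologicalSpace Y'] {g : X' → Y'}
    (hf : IsIrreducibleMap f) (hg : IsIrreducibleMap g) : IsIrreducibleMap (Prod.map f g) where
  continuous := hf.continuous.prodMap hg.continuous
  exists_preimage_subset := by
    rintro V hV ⟨⟨a, b⟩, hab⟩
    obtain ⟨u, v, hu, hv, hau, hbv, huv⟩ := isOpen_prod_iff.1 hV a b hab
    obtain ⟨O, hO, hOne, hOf, hOu⟩ := hf.exists_preimage_subset u hu ⟨a, hau⟩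
    obtain ⟨P, hP, hPne, hPg, hPv⟩ := hg.exists_preimage_subset v hv ⟨b, hbv⟩
    refine ⟨O ×ˢ P, hO.prod hP, hOne.prod hPne, ?_, ?_⟩
    · rw [range_prodMap]
      exact prod_mono hOf hPg
    · rw [preimage_prod_map_prod]
      exact (prod_mono hOu hPv).trans huv

theorem dense_preimage (hf : IsIrreducibleMap f) {D : Set Y} (hD : Dense D) :
    Dense (f ⁻¹' D) := by
  refine dense_iff_inter_open.2 fun V hV hne => ?_
  obtain ⟨O, hO, hOne, hOf, hOV⟩ := hf.exists_preimage_subset V hV hne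
  obtain ⟨y, hyO, hyD⟩ := hD.inter_open_nonempty O hO hOne
  obtain ⟨x, rfl⟩ := hOf hyO
  exact ⟨x, hOV hyO, hyD⟩

theorem dense_interior_kernImage (hf : IsIrreducibleMap f) {D : Set X} (hDo : IsOpen D)
    (hD : Dense D) : Dense (interior (kernImage f D)) := by
  refine dense_iff_inter_open.2 fun V hV hne => ?_
  suffices ∃ O ⊆ V, IsOpen O ∧ O.Nonempty ∧ f ⁻¹' O ⊆ D by
    obtain ⟨O, hOV, hO, hOne, hOD⟩ := this
    exact hOne.mono (subset_inter hOV (interior_maximal (subset_kernImage_iff.2 hOD) hO))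
  have hfV : IsOpen (f ⁻¹' V) := hV.preimage hf.continuous
  rcases (f ⁻¹' V).eq_empty_or_nonempty with hempty | hfVne
  · exact ⟨V, Subset.rfl, hV, hne, hempty.trans_subset (empty_subset D)⟩
  · obtain ⟨O, hO, hOne, hOf, hOVD⟩ := hf.exists_preimage_subset (f ⁻¹' V ∩ D) (hfV.inter hDo)
      (hD.inter_open_nonempty _ hfV hfVne)
    refine ⟨O, fun y hy => ?_, hO, hOne, hOVD.trans inter_subset_right⟩
    obtain ⟨x, rfl⟩ := hOf hy
    exact (hOVD hy).1

theorem comap_residual (hf : IsIrreducibleMap f) : comap f (residual Y) = residual X := by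
  refine le_antisymm ?_ (map_le_iff_le_comap.1 ?_)
  · refine le_countableGenerate_iff_of_countableInterFilter.2 fun D ⟨hDo, hD⟩ => ?_
    exact mem_comap''.2 (mem_of_superset
      (residual_of_dense_open isOpen_interior (hf.dense_interior_kernImage hDo hD))
      interior_subset)
  · refine le_countableGenerate_iff_of_countableInterFilter.2 fun D ⟨hDo, hD⟩ => ?_
    exact residual_of_dense_open (hDo.preimage hf.continuous) (hf.dense_preimage hD)

theorem tendsto_residual (hf : IsIrreducibleMap f) : Tendsto f (residual X) (residual Y) :=
  map_le_iff_le_comap.2 hf.comap_residual.ge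

theorem baireMeasurableSet_preimage (hf : IsIrreducibleMap f) {S : Set Y}
    (hS : BaireMeasurableSet S) : BaireMeasurableSet (f ⁻¹' S) := by
  obtain ⟨U, hU, hSU⟩ := hS.residualEq_isOpen
  exact (hU.preimage hf.continuous).baireMeasurableSet.congr
    (hSU.symm.comp_tendsto hf.tendsto_residual)

theorem nowhereMeager_preimage (hf : IsIrreducibleMap f) {A W : Set Y} (hr : range f ⊆ W)
    (hA : NowhereMeagerOn A W) : NowhereMeager (f ⁻¹' A) := by
  intro V hV hne hM
  obtain ⟨O, hO, hOne, hOf, hOV⟩ := hf.exists_preimage_subset V hV hne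
  rw [IsMeagre, ← hf.comap_residual] at hM
  obtain ⟨R, hR, hRM⟩ := mem_comap.1 hM
  refine hA O (hOf.trans hr) hO hOne (mem_of_superset hR ?_)
  rintro y hyR ⟨hyA, hyO⟩
  obtain ⟨x, rfl⟩ := hOf hyO
  exact hRM hyR ⟨hyA, hOV hyO⟩

theorem subset_closure_preimage_interior_kernImage (hf : IsIrreducibleMap f) {B : Set X}
    (hB : IsOpen B) : B ⊆ closure (f ⁻¹' interior (kernImage f B)) := by
  refine fun x hxB => mem_closure_iff.2 fun V hV hxV => ?_
  obtain ⟨O, hO, ⟨y, hy⟩, hOf, hOVB⟩ :=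
    hf.exists_preimage_subset (V ∩ B) (hV.inter hB) ⟨x, hxV, hxB⟩
  obtain ⟨z, rfl⟩ := hOf hy
  have hOB : O ⊆ kernImage f B := subset_kernImage_iff.2 (hOVB.trans inter_subset_right)
  exact ⟨z, (hOVB hy).1, interior_maximal hOB hO hy⟩

theorem eventually_residual_injective [SecondCountableTopology X] [T1Space X]
    (hf : IsIrreducibleMap f) : ∀ᵇ x, ∀ y, f y = f x → y = x := by
  -- Almost every point of `B` has its whole fiber in `B`; let `B` run over a countable basis.
  have fiber_subset (B : Set X) (hB : IsOpen B) :
      ∀ᵇ x, x ∈ B → f x ∈ kernImage f B := by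
    let G : Set X := f ⁻¹' interior (kernImage f B)
    have hG : IsOpen G := isOpen_interior.preimage hf.continuous
    have dense_union : Dense (G ∪ (closure B)ᶜ) := by
      have closure_B_subset : closure B ⊆ closure G :=
        closure_minimal (hf.subset_closure_preimage_interior_kernImage hB) isClosed_closure
      intro x
      rw [closure_union]
      by_cases hx : x ∈ closure B
      · exact Or.inl (closure_B_subset hx)
      · exact Or.inr (subset_closure hx)
    filter_upwards [residual_of_dense_open (hG.union isClosed_closure.isOpen_compl) dense_union]
      with x hx hxB
    exact hx.elim (fun h => interior_subset h) fun h => absurd (subset_closure hxB) h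
  have all_fibers_subset : ∀ᵇ x, ∀ B ∈ TopologicalSpace.countableBasis X,
      x ∈ B → f x ∈ kernImage f B :=
    (eventually_countable_ball (TopologicalSpace.countable_countableBasis X)).2
      fun B hB => fiber_subset B (TopologicalSpace.isOpen_of_mem_countableBasis hB)
  filter_upwards [all_fibers_subset] with x hx y hyx
  by_contra hne
  obtain ⟨B, hB, hxB, hBy⟩ := (TopologicalSpace.isBasis_countableBasis X).exists_subset_of_mem_open
    (show x ∈ ({y}ᶜ : Set X) from Ne.symm hne) isOpen_compl_singleton
  exact hBy (hx B hB hxB hyx) rfl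

theorem exists_measurable_eventually_leftInverse [PolishSpace X] [MeasurableSpace X]
    [BorelSpace X] [Nonempty X] [T2Space Y] [MeasurableSpace Y] [BorelSpace Y]
    (hf : IsIrreducibleMap f) :
    ∃ s : Y → X, Measurable s ∧ ∀ᵇ x, s (f x) = x := by
  obtain ⟨D, hD_inj, hDδ, hD⟩ := mem_residual.1 hf.eventually_residual_injective
  have embedding : MeasurableEmbedding (D.domRestrict f) :=
    hf.continuous.continuousOn.measurableEmbedding hDδ.measurableSet
      fun x _ y hy hxy => hD_inj hy x hxy
  obtain ⟨s, hs, hsf⟩ := embedding.exists_measurable_extend measurable_subtype_coe fun _ => ‹_›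
  refine ⟨s, hs, ?_⟩
  filter_upwards [residual_of_dense_Gδ hDδ hD] with x hx
  exact congrFun hsf ⟨x, hx⟩

end IsIrreducibleMap

section BinaryExpansion

theorem coe_fromBinary_eq_add_tail_div_two (x : ℕ → Bool) :
    (Real.fromBinary x : ℝ) =
      ((if x 0 then 1 else 0) + Real.fromBinary fun i => x (i + 1)) / 2 := by
  have coe_fromBinary (y : ℕ → Bool) :
      (Real.fromBinary y : ℝ) = Real.ofDigits fun i => finTwoEquiv.symm (y i) := rfl
  have coe_digit (b : Bool) : ((finTwoEquiv.symm b : ℕ) : ℝ) = if b then 1 else 0 := by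
    cases b <;> simp [finTwoEquiv]
  rw [coe_fromBinary, coe_fromBinary,
    Real.ofDigits_eq_sum_add_ofDigits (fun i => finTwoEquiv.symm (x i)) 1,
    Finset.sum_range_one, Real.ofDigitsTerm, coe_digit]
  push_cast
  ring

theorem exists_isOpen_fromBinary_preimage_subset_cylinder (a : ℕ → Bool) (n : ℕ) :
    ∃ O : Set ℝ, IsOpen O ∧ O.Nonempty ∧ O ⊆ Ioo 0 1 ∧
      ∀ x, (Real.fromBinary x : ℝ) ∈ O → x ∈ PiNat.cylinder a n := by
  induction n generalizing a with
  | zero => exact ⟨Ioo 0 1, isOpen_Ioo, nonempty_Ioo.2 one_pos, Subset.rfl, by simp⟩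
  | succ n ih =>
    obtain ⟨O, hO, ⟨t, ht⟩, hO01, hOa⟩ := ih fun i => a (i + 1)
    let d : Bool → ℝ := fun b => if b then 1 else 0
    refine ⟨(fun r => 2 * r - d (a 0)) ⁻¹' O, hO.preimage (by fun_prop),
      ⟨(d (a 0) + t) / 2, by simpa [mul_div_cancel₀] using ht⟩, fun r hr => ?_, fun x hx => ?_⟩
    · obtain ⟨hr0, hr1⟩ := hO01 hr
      cases h : a 0 <;> simp only [d, h, if_true, Bool.false_eq_true, if_false] at hr0 hr1 <;>
        constructor <;> linarith
    · let y : ℕ → Bool := fun i => x (i + 1)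
      have hx_tail : d (x 0) - d (a 0) + Real.fromBinary y ∈ O := by
        have shift_eq : 2 * (Real.fromBinary x : ℝ) - d (a 0) =
            d (x 0) - d (a 0) + Real.fromBinary y := by
          rw [coe_fromBinary_eq_add_tail_div_two]
          ring
        exact shift_eq ▸ hx
      -- The tail lies in `[0, 1]` and the sum in `(0, 1)`, so the leading digits agree.
      have head_eq : x 0 = a 0 := by
        obtain ⟨h0, h1⟩ := hO01 hx_tail
        obtain ⟨hy0, hy1⟩ := (Real.fromBinary y).2
        cases hx0 : x 0 <;> cases ha0 : a 0 <;> simp [d, hx0, ha0] at h0 h1 ⊢ <;> linarith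
      have tail_mem : y ∈ PiNat.cylinder (fun i => a (i + 1)) n := by
        apply hOa
        simpa only [head_eq, sub_self, zero_add] using hx_tail
      rintro (_ | i) hi
      · exact head_eq
      · exact tail_mem i (Nat.lt_of_succ_lt_succ hi)

theorem isIrreducibleMap_coe_fromBinary :
    IsIrreducibleMap fun x : ℕ → Bool => (Real.fromBinary x : ℝ) where
  continuous := continuous_subtype_val.comp Real.fromBinary_continuous
  exists_preimage_subset V hV hne := by
    obtain ⟨a, ha⟩ := hne
    obtain ⟨_, ⟨b, n, rfl⟩, -, hbV⟩ :=
      (PiNat.isTopologicalBasis_cylinders fun _ : ℕ => Bool).exists_subset_of_mem_open ha hV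
    obtain ⟨O, hO, hOne, hO01, hOb⟩ := exists_isOpen_fromBinary_preimage_subset_cylinder b n
    refine ⟨O, hO, hOne, fun t ht => ?_, fun x hx => hbV (hOb x hx)⟩
    obtain ⟨x, hx⟩ := Real.fromBinary_surjective ⟨t, Ioo_subset_Icc_self (hO01 ht)⟩
    exact ⟨x, congrArg Subtype.val hx⟩

end BinaryExpansion

/-- Irreducible images of the Cantor space `2^ω` can be found inside every nonempty open subset of
`X`. This is what transfers (H) from `2^ω` to other spaces. -/
def HasCantorParametrizations (X : Type*) [TopologicalSpace X] : Prop :=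
  ∀ U : Set X, IsOpen U → U.Nonempty →
    ∃ φ : (ℕ → Bool) → X, IsIrreducibleMap φ ∧ range φ ⊆ U

theorem hasCantorParametrizations_real : HasCantorParametrizations ℝ := by
  rintro U hU ⟨p, hp⟩
  obtain ⟨ε, hε, hεU⟩ := (nhds_basis_Icc_pos p).mem_iff.1 (hU.mem_nhds hp)
  let e : ℝ ≃ₜ ℝ := affineHomeomorph ε p hε.ne'
  refine ⟨_, (isIrreducibleMap_homeomorph e).comp isIrreducibleMap_coe_fromBinary, ?_⟩
  rintro _ ⟨x, rfl⟩
  have hx := mem_image_of_mem e (Real.fromBinary x).2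
  rw [affineHomeomorph_image_Icc ε p 0 1 hε] at hx
  exact hεU (Icc_subset_Icc (by linarith) (by linarith) hx)

theorem stmt_4_general {X Y : Type*} [TopologicalSpace X] [T2Space X] [SecondCountableTopology X]
    [MeasurableSpace X] [BorelSpace X] [TopologicalSpace Y] [SecondCountableTopology Y]
    [MeasurableSpace Y] [BorelSpace Y]
    (hX : HasCantorParametrizations X) (hY : HasCantorParametrizations Y)
    (hH : ∀ A : Set ((ℕ → Bool) × (ℕ → Bool)), NowhereMeager A → NowhereMeager Aᶜ →
      ∃ h : (ℕ → Bool) → (ℕ → Bool), Measurable h ∧ ¬ HasBaireProperty {x | (x, h x) ∈ A})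
    (A : Set (X × Y)) (hA : ¬ HasBaireProperty A) :
    ∃ f : X → Y, Measurable f ∧ ¬ HasBaireProperty {x : X | (x, f x) ∈ A} := by
  simp only [hasBaireProperty_iff_baireMeasurableSet] at hH ⊢
  obtain ⟨W, hW, ⟨⟨p, q⟩, hpq⟩, hWA, hWAc⟩ :=
    exists_isOpen_nowhereMeagerOn_of_not_hasBaireProperty hA
  obtain ⟨U, V, hU, hV, hpU, hqV, hUVW⟩ := isOpen_prod_iff.1 hW p q hpq
  obtain ⟨φ, hφ, hφU⟩ := hX U hU ⟨p, hpU⟩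
  obtain ⟨ψ, hψ, hψV⟩ := hY V hV ⟨q, hqV⟩
  have hφψ : IsIrreducibleMap (Prod.map φ ψ) := hφ.prodMap hψ
  have hφψW : range (Prod.map φ ψ) ⊆ W :=
    range_prodMap.trans_subset ((prod_mono hφU hψV).trans hUVW)
  obtain ⟨h, hh, hhA⟩ := hH (Prod.map φ ψ ⁻¹' A) (hφψ.nowhereMeager_preimage hφψW hWA)
    (hφψ.nowhereMeager_preimage hφψW hWAc)
  have : PolishSpace (ℕ → Bool) := { }
  obtain ⟨s, hs, hsφ⟩ := hφ.exists_measurable_eventually_leftInverse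
  refine ⟨ψ ∘ h ∘ s, hψ.continuous.measurable.comp (hh.comp hs), fun hT => hhA ?_⟩
  refine (hφ.baireMeasurableSet_preimage hT).congr (eventuallyEq_set.2 ?_)
  filter_upwards [hsφ] with x hx
  simp only [mem_preimage, mem_ofPred_eq, Function.comp_apply, Prod.map_apply, hx]

theorem stmt_4 (hH : HypH) (A : Set (ℝ × ℝ)) (hA : ¬ HasBaireProperty A) :
    ∃ f : ℝ → ℝ, Measurable f ∧ ¬ HasBaireProperty {x : ℝ | (x, f x) ∈ A} := by
  refine stmt_4_general hasCantorParametrizations_real hasCantorParametrizations_real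
    (fun B hB hBc => ?_) A hA
  obtain ⟨h, hh⟩ := hH B hB hBc
  exact ⟨h, h.measurable, hh⟩
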